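/- Let a : ℕ^d → ℝ be such that ∑_{α ∈ ℕ^d} |(Δ a)(α)| < ∞, and suppose a(α) converges to a limit ℓ ∈ ℝ as min_{1≤i≤d} α_i → ∞ (i.e., for every ε > 0 there exists M such that |a(α) − ℓ| ≤ ε whenever α_i ≥ M for all i). Then ∑_{α ∈ ℕ^d} (Δ a)(α) = ℓ. (This is the collapsing identity E[φ(X)] = ∑_{α ∈ ℕ_0^d} Δ E_α[φ_α(X_α)] of the paper.) -/

import Mathlib

/-- The coordinate difference operator `Δᵢ`: `(Δᵢ a)(α) = a(α) - a(α - eᵢ)` if `αᵢ > 0`,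
and `(Δᵢ a)(α) = a(α)` if `αᵢ = 0`. -/
noncomputable def coordDiff {d : ℕ} (i : Fin d) (a : (Fin d → ℕ) → ℝ) :
    (Fin d → ℕ) → ℝ := fun α =>
  if α i = 0 then a α else a α - a (Function.update α i (α i - 1))

/-- The mixed difference operator `Δ = Δ_d ∘ ⋯ ∘ Δ_1`. -/
noncomputable def mixedDiff {d : ℕ} (a : (Fin d → ℕ) → ℝ) : (Fin d → ℕ) → ℝ :=
  (List.finRange d).foldl (fun b i => coordDiff i b) a

/-! Summing `Δᵢ a` over the coordinate `i` from `0` to `αᵢ` telescopes to the value of `a` at the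
top end `αᵢ`. Doing this in every coordinate shows that `∑_{γ ≤ α} (Δ a)(γ) = a(α)`, so `a` is the
net of partial sums of `Δ a` over the boxes `{γ ≤ α}`. These boxes exhaust `ℕ^d`, hence `a`
converges to `∑ Δ a` as soon as `Δ a` is summable. -/

open Filter Finset Function Topology

/-- The factor `{c}` is a placeholder: it removes the coordinate `i` from the summation without
changing the index type. -/
theorem sum_piFinset_update {ι M : Type*} {κ : ι → Type*} [Fintype ι] [DecidableEq ι]
    [AddCommMonoid M] (s : ∀ i, Finset (κ i)) (i : ι) (t : Finset (κ i)) (c : κ i)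
    (f : (∀ i, κ i) → M) :
    ∑ γ ∈ Fintype.piFinset (update s i t), f γ =
      ∑ γ ∈ Fintype.piFinset (update s i {c}), ∑ k ∈ t, f (update γ i k) := by
  have mem_update (u : Finset (κ i)) (γ : ∀ i, κ i) :
      γ ∈ Fintype.piFinset (update s i u) ↔ γ i ∈ u ∧ ∀ j ≠ i, γ j ∈ s j := by
    rw [Fintype.mem_piFinset, forall_update_iff s fun j u => γ j ∈ u]
  rw [← sum_product']
  refine sum_nbij' (fun γ => (update γ i c, γ i)) (fun p => update p.1 i p.2) ?_ ?_ ?_ ?_ ?_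
  · simp +contextual [mem_update]
  · simp +contextual [mem_update]
  · simp
  · rintro ⟨γ, k⟩ h
    obtain rfl : γ i = c := by simp_all
    simp
  · simp

theorem tendsto_atTop_pi_of_dist_le {ι κ X : Type*} [Preorder κ] [PseudoMetricSpace X]
    {f : (ι → κ) → X} {x : X}
    (h : ∀ ε > 0, ∃ M : κ, ∀ α : ι → κ, (∀ i, M ≤ α i) → dist (f α) x ≤ ε) :
    Tendsto f atTop (𝓝 x) := by
  refine Metric.nhds_basis_closedBall.tendsto_right_iff.2 fun ε hε => ?_
  obtain ⟨M, hM⟩ := h ε hε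
  filter_upwards [eventually_ge_atTop fun _ => M] with α hα using hM α hα

section Telescoping

variable {d : ℕ}

theorem sum_Iic_coordDiff_update (i : Fin d) (a : (Fin d → ℕ) → ℝ) (γ : Fin d → ℕ) (n : ℕ) :
    ∑ k ∈ Iic n, coordDiff i a (update γ i k) = a (update γ i n) := by
  rw [← Nat.range_succ_eq_Iic]
  induction n with
  | zero => simp [coordDiff]
  | succ n ih =>
    rw [sum_range_succ, ih]
    simp [coordDiff]

theorem sum_piFinset_coordDiff (s : Fin d → Finset ℕ) {i : Fin d} {n : ℕ} (hs : s i = Iic n)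
    (a : (Fin d → ℕ) → ℝ) :
    ∑ γ ∈ Fintype.piFinset s, coordDiff i a γ =
      ∑ γ ∈ Fintype.piFinset (update s i {n}), a γ :=
  calc ∑ γ ∈ Fintype.piFinset s, coordDiff i a γ
      = ∑ γ ∈ Fintype.piFinset (update s i (Iic n)), coordDiff i a γ := by
        rw [← hs, update_eq_self]
    _ = ∑ γ ∈ Fintype.piFinset (update s i {n}), a (update γ i n) := by
        simp only [sum_piFinset_update s i (Iic n) n, sum_Iic_coordDiff_update]
    _ = ∑ γ ∈ Fintype.piFinset (update s i {n}), a γ := by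
        simp only [sum_piFinset_update s i {n} n a, sum_singleton]

theorem sum_piFinset_foldl_coordDiff {l : List (Fin d)} (hl : l.Nodup) (s : Fin d → Finset ℕ)
    {α : Fin d → ℕ} (hs : ∀ i ∈ l, s i = Iic (α i)) (a : (Fin d → ℕ) → ℝ) :
    ∑ γ ∈ Fintype.piFinset s, l.foldl (fun b i => coordDiff i b) a γ =
      ∑ γ ∈ Fintype.piFinset (fun j => if j ∈ l then {α j} else s j), a γ := by
  induction l generalizing a with
  | nil => simp
  | cons i l ih =>
    obtain ⟨hil, hl⟩ := List.nodup_cons.1 hl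
    have side_i : (if i ∈ l then {α i} else s i) = Iic (α i) := by
      rw [if_neg hil, hs i List.mem_cons_self]
    rw [List.foldl_cons, ih hl fun j hj => hs j (List.mem_cons_of_mem i hj),
      sum_piFinset_coordDiff _ side_i]
    congr! 2
    ext1 j
    by_cases hji : j = i
    · subst hji
      simp
    · simp [hji]

theorem sum_Iic_mixedDiff (a : (Fin d → ℕ) → ℝ) (α : Fin d → ℕ) :
    ∑ γ ∈ Iic α, mixedDiff a γ = a α := by
  have box_eq : Iic α = Fintype.piFinset fun i => Iic (α i) := by
    ext γ
    simp [Pi.le_def]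
  rw [box_eq]
  simp [mixedDiff, sum_piFinset_foldl_coordDiff (List.nodup_finRange d) _ fun _ _ => rfl]

theorem tsum_mixedDiff_eq_limit_general {a : (Fin d → ℕ) → ℝ} (hsum : Summable (mixedDiff a)) :
    Tendsto a atTop (𝓝 (∑' α, mixedDiff a α)) := by
  have box_sums := hsum.hasSum.comp tendsto_finset_Iic_atTop_atTop
  simpa only [comp_def, sum_Iic_mixedDiff] using box_sums

end Telescoping

/-- If `∑_{α ∈ ℕ^d} |(Δ a)(α)| < ∞` and `a(α) → ℓ` as `min_i αᵢ → ∞`,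
then `∑_{α ∈ ℕ^d} (Δ a)(α) = ℓ` (the collapsing identity). -/
theorem tsum_mixedDiff_eq_limit {d : ℕ} (hd : 1 ≤ d) (a : (Fin d → ℕ) → ℝ) (ℓ : ℝ)
    (hsum : Summable fun α : Fin d → ℕ => |mixedDiff a α|)
    (hlim : ∀ ε : ℝ, 0 < ε → ∃ M : ℕ, ∀ α : Fin d → ℕ, (∀ i, M ≤ α i) → |a α - ℓ| ≤ ε) :
    ∑' α : Fin d → ℕ, mixedDiff a α = ℓ := by
  exact tendsto_nhds_unique (tsum_mixedDiff_eq_limit_general hsum.of_abs)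
    (tendsto_atTop_pi_of_dist_le hlim)
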